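/- arXiv:math/0501254 — 7 statements merged into one kernel-verified Lean document; each statement's English description precedes it below -/
import Mathlib

section
/- Let (φ, φ̃) be a morphism of G-Galois extensions from ψ : R → S to ψ' : R' → S', i.e. φ : S → S' is a G-equivariant ring homomorphism, φ̃ : R → R' is a ring homomorphism, and ψ' ∘ φ̃ = φ ∘ ψ. If η_e ∈ S ⊗_R S is the Galois element of ψ and η'_e ∈ S' ⊗_{R'} S' is the Galois element of ψ', then (φ ⊗ φ)(η_e) = η'_e. -/
open scoped TensorProduct

namespace Nuss
noncomputable section

variable {R S : Type*} [Ring R] [Ring S]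

/-- The subgroup of `S ⊗[ℤ] S` of relations defining the balanced product `S ⊗[R] S`,
where both `R`-module structures on `S` are induced by the ring homomorphism `ψ`. -/
def galRel (ψ : R →+* S) : AddSubgroup (TensorProduct ℤ S S) :=
  AddSubgroup.closure
    {x | ∃ (s t : S) (r : R), x = (s * ψ r) ⊗ₜ[ℤ] t - s ⊗ₜ[ℤ] (ψ r * t)}

/-- The balanced tensor product `S ⊗[R] S` along a ring homomorphism `ψ : R →+* S`
(`R` possibly noncommutative). -/
def Tensor (ψ : R →+* S) : Type _ := (TensorProduct ℤ S S) ⧸ galRel ψ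

instance (ψ : R →+* S) : AddCommGroup (Tensor ψ) :=
  QuotientAddGroup.Quotient.addCommGroup _

/-- The class of the pure tensor `s ⊗ t` in `S ⊗[R] S`. -/
def tmk (ψ : R →+* S) (s t : S) : Tensor ψ := QuotientAddGroup.mk (s ⊗ₜ[ℤ] t)

variable {G : Type*} [Group G]

/-- The biadditive map `(s, t) ↦ (g ↦ s ⬝ g(t))`. -/
def gammaBil (act : G →* RingAut S) : S →+ S →+ (G → S) :=
  AddMonoidHom.mk'
    (fun s => AddMonoidHom.mk' (fun t => fun g => s * act g t)
      (fun t t' => by funext g; simp [map_add, mul_add]))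
    (fun s s' => by ext t g; simp [add_mul])

/-- The Galois map on `S ⊗[ℤ] S`. -/
def gammaZ (act : G →* RingAut S) : TensorProduct ℤ S S →+ (G → S) :=
  TensorProduct.liftAddHom (gammaBil act) (fun z s t => by
    rw [map_zsmul, AddMonoidHom.smul_apply, map_zsmul])

@[simp] lemma gammaZ_tmul (act : G →* RingAut S) (s t : S) :
    gammaZ act (s ⊗ₜ[ℤ] t) = fun g => s * act g t := rfl

/-- The Galois map `Γ : S ⊗[R] S → Map(G, S)`, `Γ(s ⊗ t)(g) = s⬝g(t)`, for an action of `G`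
fixing `ψ(R)` pointwise. -/
def galoisMap (ψ : R →+* S) (act : G →* RingAut S)
    (hfix : ∀ (g : G) (r : R), act g (ψ r) = ψ r) :
    Tensor ψ →+ (G → S) :=
  QuotientAddGroup.lift (galRel ψ) (gammaZ act) (by
    intro x hx
    refine (AddSubgroup.closure_le ((gammaZ act).ker)).2 ?_ hx
    rintro y ⟨s, t, r, rfl⟩
    simp only [SetLike.mem_coe, AddMonoidHom.mem_ker, map_sub, gammaZ_tmul]
    funext g
    simp [map_mul, hfix, mul_assoc])

@[simp] lemma galoisMap_tmk (ψ : R →+* S) (act : G →* RingAut S)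
    (hfix : ∀ (g : G) (r : R), act g (ψ r) = ψ r) (s t : S) :
    galoisMap ψ act hfix (tmk ψ s t) = fun g => s * act g t := rfl

/-- A ring homomorphism `ψ : R →+* S` is faithfully flat if `S` is a faithfully flat left
`R`-module via `ψ`; this is rendered through the equational criterion for flatness together
with the condition `mS ≠ S` for every maximal left ideal `m` of `R`. -/
def IsFaithfullyFlatRingHom (ψ : R →+* S) : Prop :=
  (∀ (ι : Type) [Fintype ι] (r : ι → R) (s : ι → S),
    (∑ i, ψ (r i) * s i) = 0 →
    ∃ (κ : Type) (_ : Fintype κ) (a : ι → κ → R) (y : κ → S),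
      (∀ i, (∑ j, ψ (a i j) * y j) = s i) ∧ ∀ j, (∑ i, r i * a i j) = 0) ∧
  (∀ I : Ideal R, I.IsMaximal →
    AddSubgroup.closure {x : S | ∃ r ∈ I, ∃ s : S, x = ψ r * s} ≠ ⊤)

/-- The function `δ_e ∈ Map(G, S)`: `1` at the neutral element, `0` elsewhere. -/
def deltaE (G S : Type*) [Group G] [Ring S] : G → S :=
  fun g => letI := Classical.decEq G; if g = 1 then 1 else 0

/-- `ψ : R → S` is a `G`-Galois extension: `G` acts on `S` by ring automorphisms fixing `ψ(R)`
pointwise, `S` is faithfully flat as a left `R`-module via `ψ`, and the Galois map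
`Γ : S ⊗_R S → Map(G,S)` is bijective. -/
structure IsGaloisExtension (G : Type*) [Group G] [Finite G] {R S : Type*} [Ring R] [Ring S]
    (ψ : R →+* S) (act : G →* RingAut S) : Prop where
  fixes : ∀ (g : G) (r : R), act g (ψ r) = ψ r
  faithfullyFlat : IsFaithfullyFlatRingHom ψ
  bijective : Function.Bijective (galoisMap ψ act fixes)

end
end Nuss

namespace Nuss
noncomputable section

/-- The map `φ ⊗ φ : S ⊗[R] S → S' ⊗[R'] S'` induced by a compatible pair of ring
homomorphisms `(φS, φR)`. -/
def tensorCongr {R S R' S' : Type*} [Ring R] [Ring S] [Ring R'] [Ring S']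
    {ψ : R →+* S} {ψ' : R' →+* S'} (φS : S →+* S') (φR : R →+* R')
    (hcomp : ∀ r : R, ψ' (φR r) = φS (ψ r)) : Tensor ψ →+ Tensor ψ' :=
  QuotientAddGroup.lift (galRel ψ)
    ((QuotientAddGroup.mk' (galRel ψ')).comp
      (TensorProduct.map φS.toAddMonoidHom.toIntLinearMap
        φS.toAddMonoidHom.toIntLinearMap).toAddMonoidHom)
    (by
      intro x hx
      refine (AddSubgroup.closure_le _).2 ?_ hx
      rintro y ⟨s, t, r, rfl⟩
      have hmem : ((TensorProduct.map φS.toAddMonoidHom.toIntLinearMap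
          φS.toAddMonoidHom.toIntLinearMap)
            ((s * ψ r) ⊗ₜ[ℤ] t - s ⊗ₜ[ℤ] (ψ r * t))) ∈ galRel ψ' := by
        rw [map_sub, TensorProduct.map_tmul, TensorProduct.map_tmul]
        refine AddSubgroup.subset_closure ⟨φS s, φS t, φR r, ?_⟩
        simp [map_mul, hcomp]
      simp only [SetLike.mem_coe, AddMonoidHom.mem_ker, AddMonoidHom.comp_apply]
      exact (QuotientAddGroup.eq_zero_iff _).2 hmem)

@[simp] lemma tensorCongr_tmk {R S R' S' : Type*} [Ring R] [Ring S] [Ring R'] [Ring S']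
    {ψ : R →+* S} {ψ' : R' →+* S'} (φS : S →+* S') (φR : R →+* R')
    (hcomp : ∀ r : R, ψ' (φR r) = φS (ψ r)) (s t : S) :
    tensorCongr φS φR hcomp (tmk ψ s t) = tmk ψ' (φS s) (φS t) := rfl

/-- Let `(φS, φR)` be a morphism of `G`-Galois extensions from `ψ : R → S`
to `ψ' : R' → S'`. If `η_e` is the Galois element of `ψ` and `η'_e` that of `ψ'`, then
`(φ ⊗ φ)(η_e) = η'_e`. -/
theorem galoisElement_map
    {R S R' S' : Type*} [Ring R] [Ring S] [Ring R'] [Ring S']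
    {G : Type*} [Group G] [Finite G]
    (ψ : R →+* S) (ψ' : R' →+* S')
    (act : G →* RingAut S) (act' : G →* RingAut S')
    (hGal : IsGaloisExtension G ψ act) (hGal' : IsGaloisExtension G ψ' act')
    (φS : S →+* S') (φR : R →+* R')
    (hcomp : ∀ r : R, ψ' (φR r) = φS (ψ r))
    (hequiv : ∀ (g : G) (s : S), φS (act g s) = act' g (φS s))
    (η : Tensor ψ) (η' : Tensor ψ')
    (hη : galoisMap ψ act hGal.fixes η = deltaE G S)
    (hη' : galoisMap ψ' act' hGal'.fixes η' = deltaE G S') :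
    tensorCongr φS φR hcomp η = η' := by
  apply hGal'.bijective.1
  rw [hη']
  have key : ∀ x : Tensor ψ, ∀ g : G,
      galoisMap ψ' act' hGal'.fixes (tensorCongr φS φR hcomp x) g =
        φS (galoisMap ψ act hGal.fixes x g) := by
    intro x g
    obtain ⟨z, rfl⟩ := QuotientAddGroup.mk_surjective x
    induction z using TensorProduct.induction_on with
    | zero =>
      change galoisMap ψ' act' hGal'.fixes (tensorCongr φS φR hcomp (0 : Tensor ψ)) g =
        φS (galoisMap ψ act hGal.fixes (0 : Tensor ψ) g)
      simp
    | tmul s t =>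
      change φS s * act' g (φS t) = φS (s * act g t)
      rw [map_mul, hequiv]
    | add a b ha hb =>
      let qa : Tensor ψ := QuotientAddGroup.mk a
      let qb : Tensor ψ := QuotientAddGroup.mk b
      change galoisMap ψ' act' hGal'.fixes (tensorCongr φS φR hcomp (qa + qb)) g =
        φS (galoisMap ψ act hGal.fixes (qa + qb) g)
      rw [map_add, map_add, map_add, Pi.add_apply, Pi.add_apply, map_add]
      exact congrArg₂ (· + ·) ha hb
  funext g
  rw [key, hη]
  unfold deltaE
  by_cases h : g = 1 <;> simp [h]

end
end Nuss
end

section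
/- Let G be a finite group and ψ : R → S a centralizing G-Galois extension with Galois element η_e = Σ_{i=1}^m xᵢ ⊗ yᵢ. In the ring S ⊗_R S ⊗_R S, set X₁₂ = Σᵢ xᵢ ⊗ yᵢ ⊗ 1, X₂₃ = Σᵢ 1 ⊗ xᵢ ⊗ yᵢ, and X₁₃ = Σᵢ xᵢ ⊗ 1 ⊗ yᵢ. Then the Galois element satisfies the Frobenius-separability equation X₁₂X₂₃ = X₂₃X₁₃ = X₁₃X₁₂, and consequently the Yang–Baxter equation X₁₂X₂₃X₁₂ = X₂₃X₁₂X₂₃. -/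
open scoped TensorProduct

namespace Nuss
noncomputable section

variable {R : Type*} [CommRing R] {S : Type*} [Ring S] [Algebra R S]
variable {G : Type*} [Group G]

/-- The Galois map `Γ : S ⊗[R] S →ₗ[R] Map(G,S)`, `Γ(s ⊗ t)(g) = s⬝g(t)`, for a centralizing
extension, i.e. an `R`-algebra `S`, with `G` acting by `R`-algebra automorphisms. -/
def gammaAlg (act : G →* (S ≃ₐ[R] S)) : S ⊗[R] S →ₗ[R] (G → S) :=
  TensorProduct.lift <| LinearMap.mk₂ R (fun s t => fun g => s * act g t)
    (fun s s' t => by funext g; simp [add_mul])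
    (fun c s t => by funext g; simp [Algebra.smul_mul_assoc])
    (fun s t t' => by funext g; simp [map_add, mul_add])
    (fun c s t => by funext g; simp [map_smul, Algebra.mul_smul_comm])

@[simp] lemma gammaAlg_tmul (act : G →* (S ≃ₐ[R] S)) (s t : S) :
    gammaAlg act (s ⊗ₜ[R] t) = fun g => s * act g t := rfl

/-- The function `δ_e ∈ Map(G, S)`: `1` at the neutral element, `0` elsewhere. -/
def deltaE' (G S : Type*) [Group G] [Ring S] : G → S :=
  fun g => letI := Classical.decEq G; if g = 1 then 1 else 0

/-- A centralizing `G`-Galois extension: `S` is an `R`-algebra (so that the structure morphism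
`ψ = algebraMap R S` lands in the centre of `S`), the finite group `G` acts on `S` by
`R`-algebra automorphisms (equivalently, by ring automorphisms fixing `ψ(R)` pointwise),
`S` is a faithfully flat `R`-module via `ψ`, and the Galois map is bijective. -/
structure IsCentralizingGaloisExtension (G : Type*) [Group G] [Finite G]
    (R S : Type*) [CommRing R] [Ring S] [Algebra R S] (act : G →* (S ≃ₐ[R] S)) : Prop where
  faithfullyFlat : Module.FaithfullyFlat R S
  bijective : Function.Bijective (gammaAlg act)

/-- A central extension: the structure morphism maps `R` bijectively onto the centre of `S`. -/
def IsCentralExtension (R S : Type*) [CommRing R] [Ring S] [Algebra R S] : Prop :=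
  Function.Injective (algebraMap R S) ∧ (algebraMap R S).range = Subring.center S

/-- A separable extension: the multiplication `μ : S ⊗[R] S → S` splits as a morphism of
`S`-bimodules; equivalently there is a Casimir element `η` with `μ(η) = 1`. -/
def IsSeparableExtension (R S : Type*) [CommRing R] [Ring S] [Algebra R S] : Prop :=
  ∃ η : S ⊗[R] S, (∀ s : S, (s ⊗ₜ[R] (1 : S)) * η = η * ((1 : S) ⊗ₜ[R] s)) ∧
    LinearMap.mul' R S η = 1

/-- A `G`-Galois-Azumaya extension: a central `G`-Galois extension `R → S` such that `S` is
an Azumaya (central separable) `R`-algebra. -/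
def IsGaloisAzumayaExtension (G : Type*) [Group G] [Finite G]
    (R S : Type*) [CommRing R] [Ring S] [Algebra R S] (act : G →* (S ≃ₐ[R] S)) : Prop :=
  IsCentralizingGaloisExtension G R S act ∧ IsCentralExtension R S ∧ IsSeparableExtension R S

end
end Nuss

namespace Nuss
noncomputable section

/-- The Galois element is a Casimir element. -/
lemma galois_casimir
    {R : Type*} [CommRing R] {S : Type*} [Ring S] [Algebra R S]
    {G : Type*} [Group G] [Finite G]
    (act : G →* (S ≃ₐ[R] S))
    (hGal : IsCentralizingGaloisExtension G R S act)
    {m : ℕ} (x y : Fin m → S)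
    (hbasis : gammaAlg act (∑ i, (x i) ⊗ₜ[R] (y i)) = deltaE' G S) (s : S) :
    ∑ i, (s * x i) ⊗ₜ[R] (y i) = ∑ i, (x i) ⊗ₜ[R] (y i * s) := by
  apply hGal.bijective.1
  funext g
  have h := congrFun hbasis g
  simp only [map_sum, gammaAlg_tmul, Finset.sum_apply] at h
  simp only [map_sum, gammaAlg_tmul, Finset.sum_apply, map_mul, mul_assoc, ← Finset.mul_sum]
  simp only [← mul_assoc, ← Finset.sum_mul]
  rw [h]
  unfold deltaE'
  by_cases hg : g = 1
  · subst hg; simp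
  · simp [hg]

/-- For a centralizing `G`-Galois extension `ψ : R → S` with Galois element
`η_e = Σ xᵢ ⊗ yᵢ`, the elements `X₁₂, X₂₃, X₁₃` of `S ⊗_R S ⊗_R S` satisfy the
Frobenius-separability equation `X₁₂X₂₃ = X₂₃X₁₃ = X₁₃X₁₂`, and consequently the
Yang–Baxter equation `X₁₂X₂₃X₁₂ = X₂₃X₁₂X₂₃`. -/
theorem galoisElement_frobenius_separability
    {R : Type*} [CommRing R] {S : Type*} [Ring S] [Algebra R S]
    {G : Type*} [Group G] [Finite G]
    (act : G →* (S ≃ₐ[R] S))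
    (hGal : IsCentralizingGaloisExtension G R S act)
    {m : ℕ} (x y : Fin m → S)
    (hbasis : gammaAlg act (∑ i, (x i) ⊗ₜ[R] (y i)) = deltaE' G S)
    (X12 X23 X13 : (S ⊗[R] S) ⊗[R] S)
    (hX12 : X12 = ∑ i, ((x i) ⊗ₜ[R] (y i)) ⊗ₜ[R] (1 : S))
    (hX23 : X23 = ∑ i, ((1 : S) ⊗ₜ[R] (x i)) ⊗ₜ[R] (y i))
    (hX13 : X13 = ∑ i, ((x i) ⊗ₜ[R] (1 : S)) ⊗ₜ[R] (y i)) :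
    X12 * X23 = X23 * X13 ∧ X23 * X13 = X13 * X12 ∧
      X12 * X23 * X12 = X23 * X12 * X23 := by
  have hc := galois_casimir act hGal x y hbasis
  have h1 : X12 * X23 = X23 * X13 := by
    subst hX12 hX23 hX13
    simp only [Finset.sum_mul_sum, Algebra.TensorProduct.tmul_mul_tmul, one_mul, mul_one]
    rw [Finset.sum_comm (f := fun i j => (x j ⊗ₜ[R] x i) ⊗ₜ[R] (y i * y j))]
    refine Finset.sum_congr rfl fun i _ => ?_
    have h := congrArg ((TensorProduct.assoc R S S S).symm ∘ fun t => x i ⊗ₜ[R] t) (hc (y i))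
    simpa [TensorProduct.tmul_sum] using h
  have h2 : X13 * X12 = X12 * X23 := by
    subst hX12 hX23 hX13
    simp only [Finset.sum_mul_sum, Algebra.TensorProduct.tmul_mul_tmul, one_mul, mul_one]
    rw [Finset.sum_comm (f := fun i j => (x i ⊗ₜ[R] (y i * x j)) ⊗ₜ[R] y j)]
    refine Finset.sum_congr rfl fun i _ => ?_
    have h := congrArg (fun t => t ⊗ₜ[R] y i) (hc (x i))
    simpa [TensorProduct.sum_tmul] using h
  refine ⟨h1, (h2.trans h1).symm, ?_⟩
  rw [h1, mul_assoc, h2, mul_assoc]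

end
end Nuss
end

section
/- Let G be a finite group and ψ : R → S a G-Galois-Azumaya extension. Then the Galois element η_e is an invertible element of the ring S ⊗_R S (with multiplication (s ⊗ t)(s' ⊗ t') = ss' ⊗ tt'). -/
open scoped TensorProduct

namespace Nuss
noncomputable section

section aux
variable {R : Type*} [CommRing R] {S : Type*} [Ring S] [Algebra R S]
variable {G : Type*} [Group G]

lemma gamma_left (act : G →* (S ≃ₐ[R] S)) (s : S) (t : S ⊗[R] S) (g : G) :
    gammaAlg act ((s ⊗ₜ[R] (1 : S)) * t) g = s * gammaAlg act t g := by
  induction t with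
  | zero => simp
  | tmul a b => simp [mul_assoc]
  | add a b ha hb => simp [mul_add, ha, hb]

lemma gamma_right (act : G →* (S ≃ₐ[R] S)) (s : S) (t : S ⊗[R] S) (g : G) :
    gammaAlg act (t * ((1 : S) ⊗ₜ[R] s)) g = gammaAlg act t g * act g s := by
  induction t with
  | zero => simp
  | tmul a b => simp [mul_assoc]
  | add a b ha hb => simp [add_mul, ha, hb]

/-- The twisted centralizer of `g`. -/
def InJ (act : G →* (S ≃ₐ[R] S)) (g : G) (a : S) : Prop := ∀ s, s * a = a * act g s

lemma InJ.mul {act : G →* (S ≃ₐ[R] S)} {g h : G} {a b : S} (ha : InJ act g a)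
    (hb : InJ act h b) : InJ act (h * g) (a * b) := by
  intro s
  rw [← mul_assoc, ha s, mul_assoc, hb, map_mul, mul_assoc]; rfl

lemma InJ.act {act : G →* (S ≃ₐ[R] S)} {g : G} {a : S} (ha : InJ act g a) (k : G) :
    InJ act (k * g * k⁻¹) (act k a) := by
  intro s
  have h := congrArg (act k) (ha (act k⁻¹ s))
  have e : act k (act k⁻¹ s) = s := by
    rw [← AlgEquiv.mul_apply, ← map_mul]; simp
  rw [map_mul, map_mul, e] at h
  rw [h, map_mul, map_mul]; rfl

/-- `b * g y = (h⁻¹ g) y * b` for `b` in `J_h`. -/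
lemma InJ.swap {act : G →* (S ≃ₐ[R] S)} {h : G} {b : S} (hb : InJ act h b) (g : G) (y : S) :
    b * act g y = act (h⁻¹ * g) y * b := by
  rw [hb, ← AlgEquiv.mul_apply, ← map_mul]; simp

lemma InJ.one_comm {act : G →* (S ≃ₐ[R] S)} {a : S} (ha : InJ act 1 a) (s : S) :
    s * a = a * s := by
  have := ha s
  simpa using this

variable [Fintype G] [DecidableEq G] {ι : Type*} [Fintype ι]

/-- projection onto `J_g` -/
def pr (act : G →* (S ≃ₐ[R] S)) (x y : ι → S) (g : G) (s : S) : S :=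
  ∑ j, x j * s * act g (y j)

variable (act : G →* (S ≃ₐ[R] S)) (hinj : Function.Injective (gammaAlg act)) (x y : ι → S)
  (hxy : ∀ g, ∑ j, x j * act g (y j) = if g = 1 then 1 else 0)

omit [Fintype G] in
include hinj hxy in
lemma pr_mem (g : G) (s : S) : InJ act g (pr act x y g s) := by
  intro u
  have hη : ∀ g, gammaAlg act (∑ j, x j ⊗ₜ[R] y j) g = if g = 1 then 1 else 0 := by
    intro g; rw [← hxy g]; simp [map_sum]
  have hpr : pr act x y g s = gammaAlg act ((∑ j, x j ⊗ₜ[R] y j) * (s ⊗ₜ[R] (1 : S))) g := by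
    simp [pr, map_sum, Finset.sum_mul]
  have hc : (u ⊗ₜ[R] (1 : S)) * (∑ j, x j ⊗ₜ[R] y j) = (∑ j, x j ⊗ₜ[R] y j) * ((1 : S) ⊗ₜ[R] u) := by
    apply hinj
    funext g
    rw [gamma_left, gamma_right, hη]
    split_ifs with h
    · subst h; simp
    · simp
  rw [hpr, ← gamma_left, ← gamma_right, ← mul_assoc, hc, mul_assoc, mul_assoc]
  simp

omit [Fintype G] in
include hxy in
lemma pr_of_mem (g h : G) (b : S) (hb : InJ act h b) :
    pr act x y g b = if g = h then b else 0 := by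
  have : pr act x y g b = (∑ j, x j * act (h⁻¹ * g) (y j)) * b := by
    rw [pr, Finset.sum_mul]
    refine Finset.sum_congr rfl fun j _ => ?_
    rw [mul_assoc, hb.swap, mul_assoc]
  rw [this, hxy]
  by_cases hg : g = h
  · subst hg; simp
  · have : ¬ (h⁻¹ * g = 1) := by
      intro h1; exact hg (inv_mul_eq_one.mp h1).symm
    simp [hg, this]

omit [DecidableEq G] in
include hinj in
lemma tr_central (t s : S) : s * (∑ g, act g t) = (∑ g, act g t) * s := by
  have key : ∀ k, act k (∑ g, act g t) = ∑ g, act g t := by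
    intro k
    rw [map_sum]
    refine Fintype.sum_equiv (Equiv.mulLeft k) _ _ fun g => ?_
    simp [map_mul]
  generalize (∑ g, act g t) = z at key
  have h : (1 : S) ⊗ₜ[R] z = z ⊗ₜ[R] (1 : S) := by
    apply hinj; funext g; simp [key]
  have := congrArg (fun w => gammaAlg act (w * (s ⊗ₜ[R] (1 : S))) 1) h
  simpa using this

include hinj hxy in
lemma sum_pr (s : S) : ∑ g, pr act x y g s = s := by
  simp only [pr]
  rw [Finset.sum_comm]
  simp_rw [← Finset.mul_sum, mul_assoc, tr_central act hinj, ← mul_assoc, ← Finset.sum_mul,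
    Finset.mul_sum]
  rw [Finset.sum_comm]
  simp [hxy]

omit [DecidableEq G] [Fintype G] in
lemma pr_mul_central (g : G) (s z : S) (hz : ∀ u, u * z = z * u) :
    pr act x y g (s * z) = pr act x y g s * z := by
  simp only [pr, Finset.sum_mul]
  refine Finset.sum_congr rfl fun j _ => ?_
  rw [← mul_assoc (x j) s z, mul_assoc (x j * s) z, ← hz, mul_assoc]
  simp only [mul_assoc]

omit [DecidableEq G] [Fintype G] in
lemma pr_sum {κ : Type*} (T : Finset κ) (g : G) (s : κ → S) :
    pr act x y g (∑ k ∈ T, s k) = ∑ k ∈ T, pr act x y g (s k) := by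
  simp only [pr, Finset.mul_sum, Finset.sum_mul]
  rw [Finset.sum_comm]

include hinj hxy in
lemma tr_zero (l : G) (hl : l ≠ 1) (b : S) (hb : InJ act l b) : ∑ g, act g b = 0 := by
  have h1 : InJ act 1 (∑ g, act g b) := fun s => by
    simpa using tr_central act hinj b s
  have h2 := pr_of_mem act x y hxy 1 1 _ h1
  rw [if_pos rfl] at h2
  rw [← h2, pr_sum]
  refine Finset.sum_eq_zero fun k _ => ?_
  rw [pr_of_mem act x y hxy 1 _ _ (hb.act k), if_neg]
  intro h
  apply hl
  have : k * l * k⁻¹ = 1 := h.symm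
  simpa using this

include hinj hxy in
lemma tr_mul (hfix : ∀ z, InJ act 1 z → ∀ g, act g z = z) (g : G) (s u : S) (hs : InJ act g s) :
    ∑ k, act k (u * s) = (Fintype.card G : S) * (pr act x y g⁻¹ u * s) := by
  conv_lhs => rw [← sum_pr act hinj x y hxy u]
  simp_rw [Finset.sum_mul, map_sum]
  rw [Finset.sum_comm, Finset.sum_eq_single g⁻¹]
  · have h1 : InJ act 1 (pr act x y g⁻¹ u * s) := by
      simpa using (pr_mem act hinj x y hxy g⁻¹ u).mul hs
    simp [hfix _ h1]
  · intro k _ hk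
    refine tr_zero act hinj x y hxy (g * k) ?_ _ ((pr_mem act hinj x y hxy k u).mul hs)
    intro h; exact hk (eq_inv_of_mul_eq_one_right h)
  · simp

include hinj hxy in
lemma t_mul (hfix : ∀ z, InJ act 1 z → ∀ g, act g z = z) (g : G) (s : S) (hs : InJ act g s) :
    (∑ j, (Fintype.card G : S) * pr act x y g (x j) * pr act x y g⁻¹ (y j)) * s = s := by
  have h0 : s = ∑ j, x j * ∑ k, act k (y j * s) := by
    simp_rw [Finset.mul_sum]
    rw [Finset.sum_comm]
    simp_rw [map_mul, ← mul_assoc, ← Finset.sum_mul, hxy]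
    simp
  have h1 : pr act x y g s = s := by simp [pr_of_mem act x y hxy g g s hs]
  conv_rhs => rw [← h1, h0, pr_sum]
  rw [Finset.sum_mul]
  refine Finset.sum_congr rfl fun j _ => ?_
  rw [pr_mul_central _ _ _ _ _ _ (fun u => tr_central act hinj _ u),
    tr_mul act hinj x y hxy hfix g s _ hs]
  simp only [← mul_assoc]
  rw [Nat.cast_comm]

lemma finrank_contra [Module.FaithfullyFlat R S] (hbij : Function.Bijective (gammaAlg act))
    (m : Ideal R) [hm : m.IsMaximal] (h : G) (c : G → S)
    (hspan : ∀ s : S, (1 : R ⧸ m) ⊗ₜ[R] s ∈ Submodule.span (R ⧸ m)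
      (Set.range fun g : {g : G // g ≠ h} => (1 : R ⧸ m) ⊗ₜ[R] c g)) : False := by
  letI : Field (R ⧸ m) := Ideal.Quotient.field m
  set V := (R ⧸ m) ⊗[R] S
  have htop : Submodule.span (R ⧸ m)
      (Set.range fun g : {g : G // g ≠ h} => (1 : R ⧸ m) ⊗ₜ[R] c g) = (⊤ : Submodule (R ⧸ m) V) := by
    rw [eq_top_iff]
    rintro v -
    induction v with
    | zero => exact zero_mem _
    | tmul a b =>
      have : a ⊗ₜ[R] b = a • ((1 : R ⧸ m) ⊗ₜ[R] b) := by simp [TensorProduct.smul_tmul']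
      rw [this]
      exact Submodule.smul_mem _ _ (hspan b)
    | add a b ha hb => exact add_mem ha hb
  haveI : Module.Finite (R ⧸ m) V := by
    refine ⟨⟨(Set.finite_range (fun g : {g : G // g ≠ h} => (1 : R ⧸ m) ⊗ₜ[R] c g)).toFinset, ?_⟩⟩
    simpa using htop
  have hle : Module.finrank (R ⧸ m) V ≤ Fintype.card {g : G // g ≠ h} := by
    have := finrank_range_le_card (R := R ⧸ m) (fun g : {g : G // g ≠ h} => ((1 : R ⧸ m) ⊗ₜ[R] c g : V))
    rw [Set.finrank, htop, finrank_top] at this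
    exact this
  have hlt : Fintype.card {g : G // g ≠ h} < Fintype.card G :=
    Fintype.card_subtype_lt (x := h) (by simp)
  have e : V ⊗[R ⧸ m] V ≃ₗ[R ⧸ m] (G → V) :=
    (TensorProduct.AlgebraTensorModule.distribBaseChange R (R ⧸ m) S S).symm ≪≫ₗ
      (LinearEquiv.ofBijective (gammaAlg act) hbij).baseChange R (R ⧸ m) _ _ ≪≫ₗ
      TensorProduct.piRight R (R ⧸ m) (R ⧸ m) (fun _ : G => S)
  have hd := e.finrank_eq
  rw [Module.finrank_tensorProduct, Module.finrank_pi_fintype] at hd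
  simp only [Finset.sum_const, Finset.card_univ, smul_eq_mul] at hd
  haveI : Nontrivial V := inferInstance
  have hpos : 0 < Module.finrank (R ⧸ m) V := Module.finrank_pos
  have := Nat.eq_of_mul_eq_mul_right hpos hd
  omega

include hxy in
lemma t_eq_one [Module.FaithfullyFlat R S] (hbij : Function.Bijective (gammaAlg act))
    (hcen : IsCentralExtension R S) (h : G) :
    ∑ j, (Fintype.card G : S) * pr act x y h (x j) * pr act x y h⁻¹ (y j) = 1 := by
  have hinj := hbij.1
  have hR : ∀ z, InJ act 1 z → ∃ r : R, algebraMap R S r = z := by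
    intro z hz
    have : z ∈ Subring.center S := by
      rw [Subring.mem_center_iff]; exact hz.one_comm
    rw [← hcen.2] at this
    exact this
  have hfix : ∀ z, InJ act 1 z → ∀ g, act g z = z := by
    intro z hz g
    obtain ⟨r, rfl⟩ := hR z hz
    simp
  have hcard : InJ act 1 (Fintype.card G : S) := fun s => by simp [Nat.cast_comm]
  have hterm : ∀ g j, InJ act 1
      ((Fintype.card G : S) * pr act x y g (x j) * pr act x y g⁻¹ (y j)) := by
    intro g j
    simpa using (hcard.mul (pr_mem act hinj x y hxy g (x j))).mul (pr_mem act hinj x y hxy g⁻¹ (y j))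
  choose r hr using fun g j => hR _ (hterm g j)
  have ht : ∀ g s, InJ act g s → (∑ j, r g j) • s = s := by
    intro g s hs
    rw [Algebra.smul_def, map_sum]
    simp_rw [hr]
    exact t_mul act hinj x y hxy hfix g s hs
  have hidem : (∑ j, r h j) * (∑ j, r h j) = ∑ j, r h j := by
    apply hcen.1
    rw [map_mul]
    simp only [map_sum]
    simp_rw [hr]
    rw [Finset.mul_sum]
    refine Finset.sum_congr rfl fun j _ => ?_
    rw [← mul_assoc, t_mul act hinj x y hxy hfix h]
    simpa using hcard.mul (pr_mem act hinj x y hxy h (x j))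
  have hunit : IsUnit (∑ j, r h j) := by
    by_contra hnu
    obtain ⟨m, hm, hmem⟩ := exists_max_ideal_of_mem_nonunits hnu
    letI : Field (R ⧸ m) := Ideal.Quotient.field m
    have hsm : ∀ (a : R) (s : S), (1 : R ⧸ m) ⊗ₜ[R] (a • s) =
        (Ideal.Quotient.mk m a) • ((1 : R ⧸ m) ⊗ₜ[R] s) := by
      intro a s
      rw [TensorProduct.tmul_smul]
      exact (algebraMap_smul (R ⧸ m) a ((1 : R ⧸ m) ⊗ₜ[R] s)).symm
    have hzero : ∀ g, (∑ j, r g j) ∈ m → ∀ s, InJ act g s → (1 : R ⧸ m) ⊗ₜ[R] s = 0 := by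
      intro g hg s hs
      rw [← ht g s hs, hsm, Ideal.Quotient.eq_zero_iff_mem.mpr hg, zero_smul]
    have hc : ∀ g, ∃ c : S, ∀ s, InJ act g s → (1 : R ⧸ m) ⊗ₜ[R] s ∈
        Submodule.span (R ⧸ m) {(1 : R ⧸ m) ⊗ₜ[R] c} := by
      intro g
      by_cases hg : (∑ j, r g j) ∈ m
      · exact ⟨0, fun s hs => by rw [hzero g hg s hs]; exact zero_mem _⟩
      · obtain ⟨j, hj⟩ : ∃ j, r g j ∉ m := by
          by_contra hcon
          push Not at hcon
          exact hg (sum_mem fun j _ => hcon j)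
        refine ⟨(Fintype.card G : S) * pr act x y g (x j), fun s hs => ?_⟩
        have hds : InJ act 1 (pr act x y g⁻¹ (y j) * s) := by
          simpa using (pr_mem act hinj x y hxy g⁻¹ (y j)).mul hs
        obtain ⟨q, hq⟩ := hR _ hds
        have h1 : r g j • s = q • ((Fintype.card G : S) * pr act x y g (x j)) := by
          rw [Algebra.smul_def, hr, mul_assoc, ← hq, Algebra.smul_def, Algebra.commutes]
        have h2 := congrArg (fun z => (1 : R ⧸ m) ⊗ₜ[R] z) h1
        simp only [hsm] at h2
        have hne : Ideal.Quotient.mk m (r g j) ≠ 0 := by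
          rwa [Ne, Ideal.Quotient.eq_zero_iff_mem]
        rw [Submodule.mem_span_singleton]
        refine ⟨(Ideal.Quotient.mk m (r g j))⁻¹ * Ideal.Quotient.mk m q, ?_⟩
        rw [mul_smul, ← h2, smul_smul, inv_mul_cancel₀ hne, one_smul]
    choose c hc using hc
    refine finrank_contra act hbij m h c fun s => ?_
    rw [← sum_pr act hinj x y hxy s, TensorProduct.tmul_sum]
    refine sum_mem fun g _ => ?_
    have hg := pr_mem act hinj x y hxy g s
    by_cases hgh : g = h
    · subst hgh
      rw [hzero g hmem _ hg]; exact zero_mem _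
    · refine Submodule.span_mono ?_ (hc g _ hg)
      rintro _ rfl
      exact ⟨⟨g, hgh⟩, rfl⟩
  have h1 : ∑ j, r h j = 1 := hunit.mul_left_cancel (by rw [hidem, mul_one])
  have := congrArg (algebraMap R S) h1
  rw [map_sum, map_one] at this
  simpa only [hr] using this

end aux

/-- For a `G`-Galois-Azumaya extension `ψ : R → S`, the Galois element
`η_e = Γ⁻¹(δ_e)` is an invertible element of the ring `S ⊗_R S` (with multiplication
`(s ⊗ t)(s' ⊗ t') = ss' ⊗ tt'`). -/
theorem galoisElement_isUnit
    {R : Type*} [CommRing R] {S : Type*} [Ring S] [Algebra R S]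
    {G : Type*} [Group G] [Finite G]
    (act : G →* (S ≃ₐ[R] S))
    (hGA : IsGaloisAzumayaExtension G R S act)
    (η : S ⊗[R] S) (hη : gammaAlg act η = deltaE' G S) :
    IsUnit η := by
  classical
  letI := Fintype.ofFinite G
  obtain ⟨⟨hff, hbij⟩, hcen, -⟩ := hGA
  have hinj := hbij.1
  obtain ⟨n, x, y, rfl⟩ : ∃ (n : ℕ) (x y : Fin n → S), η = ∑ j, x j ⊗ₜ[R] y j := by
    obtain ⟨T, hT⟩ := TensorProduct.exists_finset η
    refine ⟨T.card, fun j => (T.equivFin.symm j).1.1, fun j => (T.equivFin.symm j).1.2, ?_⟩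
    rw [hT, ← Finset.sum_coe_sort]
    exact (Equiv.sum_comp T.equivFin.symm (fun i : T => i.1.1 ⊗ₜ[R] i.1.2)).symm
  have hxy : ∀ g, ∑ j, x j * act g (y j) = if g = 1 then 1 else 0 := by
    intro g
    have := congrFun hη g
    simp only [map_sum, Finset.sum_apply, gammaAlg_tmul, deltaE'] at this
    rw [this]
  have hone := t_eq_one act x y hxy hbij hcen
  have hJ := pr_mem act hinj x y hxy
  have hcard : InJ act 1 (Fintype.card G : S) := fun s => by simp [Nat.cast_comm]
  have hJ' : ∀ g s, InJ act g ((Fintype.card G : S) * pr act x y g s) := by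
    intro g s
    simpa using hcard.mul (hJ g s)
  -- right inverse
  have hright : ∃ θ, (∑ j, x j ⊗ₜ[R] y j) * θ = 1 := by
    refine ⟨∑ g, ∑ k, pr act x y g (y k) ⊗ₜ[R]
      ((Fintype.card G : S) * pr act x y g⁻¹ (x k)), ?_⟩
    apply hinj
    funext h
    have e1 : ∀ c d : S, gammaAlg act ((∑ j, x j ⊗ₜ[R] y j) * (c ⊗ₜ[R] d)) h =
        pr act x y h c * act h d := by
      intro c d
      simp [pr, Finset.sum_mul, map_sum, mul_assoc]
    simp only [Finset.mul_sum, map_sum, Finset.sum_apply, e1]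
    rw [Finset.sum_eq_single h]
    · have h1 := hone h⁻¹
      rw [inv_inv] at h1
      rw [Algebra.TensorProduct.one_def, gammaAlg_tmul]
      simp only [map_one, mul_one]
      rw [← h1]
      refine Finset.sum_congr rfl fun k _ => ?_
      rw [pr_of_mem act x y hxy h h _ (hJ h _), if_pos rfl, ← hJ h (y k)]
    · intro g _ hg
      refine Finset.sum_eq_zero fun k _ => ?_
      rw [pr_of_mem act x y hxy h g _ (hJ g _), if_neg (Ne.symm hg), zero_mul]
    · simp
  have hleft : ∃ θ, θ * (∑ j, x j ⊗ₜ[R] y j) = 1 := by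
    refine ⟨∑ g, ∑ k, ((Fintype.card G : S) * pr act x y g (x k)) ⊗ₜ[R]
      (act g (pr act x y g⁻¹ (y k))), ?_⟩
    apply hinj
    funext h
    have e1 : ∀ (c d : S) (l : G), InJ act l d →
        gammaAlg act ((c ⊗ₜ[R] d) * (∑ j, x j ⊗ₜ[R] y j)) h =
        if h * l⁻¹ = 1 then c * act h d else 0 := by
      intro c d l hd
      have h2 : gammaAlg act ((c ⊗ₜ[R] d) * (∑ j, x j ⊗ₜ[R] y j)) h =
          c * (∑ j, x j * act (h * l⁻¹) (y j)) * act h d := by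
        simp only [Finset.mul_sum, Finset.sum_mul, map_sum, Finset.sum_apply,
          Algebra.TensorProduct.tmul_mul_tmul, gammaAlg_tmul, map_mul, mul_assoc]
        refine Finset.sum_congr rfl fun j _ => ?_
        have h3 := (hd.act h).swap h (y j)
        have h4 : (h * l * h⁻¹)⁻¹ * h = h * l⁻¹ := by group
        rw [h4, map_mul] at h3
        rw [h3]
      rw [h2, hxy]
      split_ifs <;> simp
    have hd : ∀ g k, InJ act g⁻¹ (act g (pr act x y g⁻¹ (y k))) := by
      intro g k
      simpa using (hJ g⁻¹ (y k)).act g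
    have e2 : ∀ g k, gammaAlg act ((((Fintype.card G : S) * pr act x y g (x k)) ⊗ₜ[R]
      (act g (pr act x y g⁻¹ (y k)))) * (∑ j, x j ⊗ₜ[R] y j)) h = _ :=
      fun g k => e1 _ _ _ (hd g k)
    rw [Finset.sum_mul, map_sum, Finset.sum_apply]
    simp_rw [Finset.sum_mul, map_sum, Finset.sum_apply, e2]
    rw [Finset.sum_eq_single h⁻¹]
    · rw [Algebra.TensorProduct.one_def, gammaAlg_tmul]
      simp only [map_one, mul_one]
      rw [← hone h⁻¹]
      refine Finset.sum_congr rfl fun k _ => ?_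
      simp
    · intro g _ hg
      refine Finset.sum_eq_zero fun k _ => ?_
      rw [if_neg]
      intro h1
      rw [inv_inv] at h1
      exact hg (eq_inv_of_mul_eq_one_right h1)
    · simp
  obtain ⟨a, ha⟩ := hright
  obtain ⟨b, hb⟩ := hleft
  exact isUnit_iff_exists_and_exists.mpr ⟨⟨a, ha⟩, ⟨b, hb⟩⟩

end
end Nuss
end

section
/- Let F be a field of characteristic different from 2, let a, b ∈ F be nonzero, and let H = (a,b/F) be the quaternion algebra over F with basis 1, i, j, k and relations i² = a, j² = b, ij = −ji = k. Then the element η = (1/4)(1 ⊗ 1 + a⁻¹·(i ⊗ i) + b⁻¹·(j ⊗ j) − (ab)⁻¹·(k ⊗ k)) of the F-algebra H ⊗_F H satisfies η² = (1/4)(1 ⊗ 1); equivalently, (2η)² = 1 ⊗ 1, so left multiplication by 2η on H ⊗_F H is an involution. -/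
open scoped TensorProduct Quaternion

/-- The computation in an arbitrary algebra: two commuting elements of square one. -/
theorem aux_galois_sq {A : Type*} [Ring A] (x y : A) (hx : x * x = 1) (hy : y * y = 1)
    (hxy : y * x = x * y) :
    (1 + x + y - x * y) * (1 + x + y - x * y) = 4 := by
  have h1 : x * (x * y) = y := by rw [← mul_assoc, hx, one_mul]
  have h2 : y * (x * y) = x := by rw [← mul_assoc, hxy, mul_assoc, hy, mul_one]
  have h3 : x * y * x = y := by rw [mul_assoc, hxy, h1]
  have h4 : x * y * y = x := by rw [mul_assoc, hy, mul_one]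
  have h5 : x * y * (x * y) = 1 := by rw [mul_assoc, h2, hx]
  simp only [mul_add, add_mul, mul_sub, sub_mul, one_mul, mul_one, h1, h2, h3, h4, h5, hx, hy, hxy]
  have : (4 : A) = 1 + 1 + 1 + 1 := by norm_num
  rw [this]
  abel

/-- Let `F` be a field of characteristic different from `2`, `a b ∈ F`
nonzero, and `H = (a,b/F)` the quaternion algebra (with `i² = a`, `j² = b`,
`ij = -ji = k`).  The element
`η = (1/4)(1 ⊗ 1 + a⁻¹ (i ⊗ i) + b⁻¹ (j ⊗ j) − (ab)⁻¹ (k ⊗ k))` of `H ⊗_F H` satisfies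
`η² = (1/4)(1 ⊗ 1)`; equivalently `(2η)² = 1 ⊗ 1`, so left multiplication by `2η` on
`H ⊗_F H` is an involution. -/
theorem quaternion_galoisElement_sq
    (F : Type*) [Field F] (hchar : (2 : F) ≠ 0)
    (a b : F) (ha : a ≠ 0) (hb : b ≠ 0)
    (η : ℍ[F, a, b] ⊗[F] ℍ[F, a, b])
    (hη : η = (4 : F)⁻¹ •
      ((1 : ℍ[F, a, b]) ⊗ₜ[F] (1 : ℍ[F, a, b])
        + a⁻¹ • ((⟨0, 1, 0, 0⟩ : ℍ[F, a, b]) ⊗ₜ[F] (⟨0, 1, 0, 0⟩ : ℍ[F, a, b]))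
        + b⁻¹ • ((⟨0, 0, 1, 0⟩ : ℍ[F, a, b]) ⊗ₜ[F] (⟨0, 0, 1, 0⟩ : ℍ[F, a, b]))
        - (a * b)⁻¹ • ((⟨0, 0, 0, 1⟩ : ℍ[F, a, b]) ⊗ₜ[F] (⟨0, 0, 0, 1⟩ : ℍ[F, a, b])))) :
    η * η = (4 : F)⁻¹ • ((1 : ℍ[F, a, b]) ⊗ₜ[F] (1 : ℍ[F, a, b])) ∧
    ((2 : F) • η) * ((2 : F) • η) = 1 ∧
    (∀ ξ : ℍ[F, a, b] ⊗[F] ℍ[F, a, b], ((2 : F) • η) * (((2 : F) • η) * ξ) = ξ) := by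
  have h4 : (4 : F) ≠ 0 := by
    have : (4 : F) = 2 * 2 := by norm_num
    rw [this]; exact mul_ne_zero hchar hchar
  set i : ℍ[F, a, b] := ⟨0, 1, 0, 0⟩ with hi
  set j : ℍ[F, a, b] := ⟨0, 0, 1, 0⟩ with hj
  set k : ℍ[F, a, b] := ⟨0, 0, 0, 1⟩ with hk
  have hii : i * i = a • (1 : ℍ[F, a, b]) := by
    ext <;> simp [hi]
  have hjj : j * j = b • (1 : ℍ[F, a, b]) := by
    ext <;> simp [hj]
  have hij : i * j = k := by
    ext <;> simp [hi, hj, hk]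
  have hji : j * i = -k := by
    ext <;> simp [hi, hj, hk]
  have key := aux_galois_sq (a⁻¹ • (i ⊗ₜ[F] i)) (b⁻¹ • (j ⊗ₜ[F] j))
    (by
      rw [smul_mul_smul_comm, Algebra.TensorProduct.tmul_mul_tmul, hii,
        TensorProduct.smul_tmul_smul, smul_smul, Algebra.TensorProduct.one_def]
      have : a⁻¹ * a⁻¹ * (a * a) = 1 := by field_simp
      rw [this, one_smul])
    (by
      rw [smul_mul_smul_comm, Algebra.TensorProduct.tmul_mul_tmul, hjj,
        TensorProduct.smul_tmul_smul, smul_smul, Algebra.TensorProduct.one_def]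
      have : b⁻¹ * b⁻¹ * (b * b) = 1 := by field_simp
      rw [this, one_smul])
    (by
      rw [smul_mul_smul_comm, smul_mul_smul_comm, Algebra.TensorProduct.tmul_mul_tmul,
        Algebra.TensorProduct.tmul_mul_tmul, hij, hji, TensorProduct.neg_tmul,
        TensorProduct.tmul_neg, neg_neg, mul_comm])
  rw [smul_mul_smul_comm, Algebra.TensorProduct.tmul_mul_tmul, hij, ← mul_inv] at key
  rw [← Algebra.TensorProduct.one_def] at hη ⊢
  have h4' : (4 : ℍ[F, a, b] ⊗[F] ℍ[F, a, b]) = (4 : F) • 1 := by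
    rw [← Algebra.algebraMap_eq_smul_one, map_ofNat]
  have e1 : η * η = (4 : F)⁻¹ • 1 := by
    rw [hη, smul_mul_smul_comm, key, h4', smul_smul, mul_assoc, inv_mul_cancel₀ h4, mul_one]
  have e2 : ((2 : F) • η) * ((2 : F) • η) = 1 := by
    rw [smul_mul_smul_comm, e1, smul_smul]
    have : (2 : F) * 2 * 4⁻¹ = 1 := by
      have : (2 : F) * 2 = 4 := by norm_num
      rw [this, mul_inv_cancel₀ h4]
    rw [this, one_smul]
  exact ⟨e1, e2, fun ξ => by rw [← mul_assoc, e2, one_mul]⟩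
end

section
/- Let n ≥ 2 be an integer and F a field whose multiplicative group F^× contains an element ζ of order n. Then there exists an action of the group (ℤ/nℤ)² by F-algebra automorphisms on the matrix algebra M_n(F) such that the inclusion F → M_n(F) (as scalar matrices) is a (ℤ/nℤ)²-Galois-Azumaya extension. -/
open scoped TensorProduct

namespace Nuss
noncomputable section

section helpers
variable {F : Type*} [Field F] {n : ℕ} [NeZero n]

/-- The conjugation action by clock and shift matrices, one group element at a time. -/
def clockFun (χ : AddChar (ZMod n) F) (e : Fin n ≃ ZMod n) (g : ZMod n × ZMod n)
    (M : Matrix (Fin n) (Fin n) F) : Matrix (Fin n) (Fin n) F :=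
  fun i j => χ (g.1 * (e i - e j)) * M (e.symm (e i + g.2)) (e.symm (e j + g.2))

lemma clockFun_zero (χ : AddChar (ZMod n) F) (e : Fin n ≃ ZMod n)
    (M : Matrix (Fin n) (Fin n) F) : clockFun χ e 0 M = M := by
  ext i j
  simp [clockFun]

lemma clockFun_add (χ : AddChar (ZMod n) F) (e : Fin n ≃ ZMod n) (g h : ZMod n × ZMod n)
    (M : Matrix (Fin n) (Fin n) F) :
    clockFun χ e (g + h) M = clockFun χ e g (clockFun χ e h M) := by
  ext i j
  simp [clockFun, add_mul, AddChar.map_add_eq_mul, mul_assoc, add_assoc]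

lemma clockFun_one (χ : AddChar (ZMod n) F) (e : Fin n ≃ ZMod n) (g : ZMod n × ZMod n) :
    clockFun χ e g 1 = 1 := by
  ext i j
  by_cases h : i = j
  · subst h; simp [clockFun]
  · simp [clockFun, h, Matrix.one_apply]

lemma clockFun_mul (χ : AddChar (ZMod n) F) (e : Fin n ≃ ZMod n) (g : ZMod n × ZMod n)
    (M N : Matrix (Fin n) (Fin n) F) :
    clockFun χ e g (M * N) = clockFun χ e g M * clockFun χ e g N := by
  ext i j
  simp only [clockFun, Matrix.mul_apply, Finset.mul_sum]
  refine (Fintype.sum_equiv ((e.trans (Equiv.addRight g.2)).trans e.symm) _ _ ?_).symm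
  intro k
  have : g.1 * (e i - e j) = g.1 * (e i - e k) + g.1 * (e k - e j) := by ring
  simp only [this, AddChar.map_add_eq_mul, Equiv.trans_apply, Equiv.coe_addRight]
  ring

/-- The action of a group element as an algebra automorphism. -/
def clockEquiv (χ : AddChar (ZMod n) F) (e : Fin n ≃ ZMod n) (g : ZMod n × ZMod n) :
    Matrix (Fin n) (Fin n) F ≃ₐ[F] Matrix (Fin n) (Fin n) F :=
  AlgEquiv.ofLinearEquiv
    { toFun := clockFun χ e g
      invFun := clockFun χ e (-g)
      map_add' := fun M N => by ext i j; simp [clockFun, mul_add]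
      map_smul' := fun c M => by ext i j; simp [clockFun]; ring
      left_inv := fun M => by rw [← clockFun_add, neg_add_cancel, clockFun_zero]
      right_inv := fun M => by rw [← clockFun_add, add_neg_cancel, clockFun_zero] }
    (clockFun_one χ e g) (clockFun_mul χ e g)

/-- The action as a group homomorphism. -/
def clockAct (χ : AddChar (ZMod n) F) (e : Fin n ≃ ZMod n) :
    Multiplicative (ZMod n × ZMod n) →*
      (Matrix (Fin n) (Fin n) F ≃ₐ[F] Matrix (Fin n) (Fin n) F) where
  toFun g := clockEquiv χ e g.toAdd
  map_one' := by ext1 M; exact clockFun_zero χ e M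
  map_mul' g h := by ext1 M; exact clockFun_add χ e g.toAdd h.toAdd M

lemma clockAct_apply (χ : AddChar (ZMod n) F) (e : Fin n ≃ ZMod n)
    (g : Multiplicative (ZMod n × ZMod n)) (M : Matrix (Fin n) (Fin n) F) :
    clockAct χ e g M = clockFun χ e g.toAdd M := rfl

lemma clock_key (χ : AddChar (ZMod n) F) (hχ : χ.IsPrimitive) (e : Fin n ≃ ZMod n)
    (g : ZMod n × ZMod n) :
    ∑ i, ∑ j, Matrix.single i j (1 : F) * clockFun χ e g (Matrix.single j i 1) =
      if g = 0 then (n : F) • 1 else 0 := by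
  obtain ⟨a, b⟩ := g
  ext k l
  have h1 : (∑ i, ∑ j, Matrix.single i j (1 : F) *
      clockFun χ e (a, b) (Matrix.single j i 1)) k l =
      ∑ j, clockFun χ e (a, b) (Matrix.single j k 1) j l := by
    simp only [Matrix.sum_apply]
    rw [Finset.sum_eq_single k]
    · simp
    · intro i _ hi
      refine Finset.sum_eq_zero fun j _ => ?_
      rw [Matrix.single_mul_apply_of_ne _ _ _ _ _ hi.symm]
    · simp
  rw [h1]
  by_cases hb : b = 0
  · subst hb
    by_cases hkl : k = l
    · subst hkl
      have h2 : ∀ j, clockFun χ e (a, 0) (Matrix.single j k 1) j k = χ (a * (e j - e k)) := by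
        intro j; simp [clockFun]
      simp only [h2]
      rw [Fintype.sum_equiv (e.trans (Equiv.subRight (e k))) (fun j => χ (a * (e j - e k)))
        (fun x => χ (x * a)) (fun j => by simp [mul_comm]), AddChar.sum_mulShift a hχ]
      by_cases ha : a = 0 <;> simp [ha, ZMod.card]
    · have : ∀ j, clockFun χ e (a, 0) (Matrix.single j k 1) j l = 0 := by
        intro j; simp [clockFun, Matrix.single_apply, hkl]
      simp only [this]
      split_ifs <;> simp [hkl]
  · have : ∀ j, clockFun χ e (a, b) (Matrix.single j k 1) j l = 0 := by
      intro j
      have : j ≠ e.symm (e j + b) := by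
        intro h
        apply hb
        have := congrArg e h
        simpa using this
      simp [clockFun, Matrix.single_apply, this]
    simp [this, hb]

lemma gamma_left_mul (act : Multiplicative (ZMod n × ZMod n) →*
      (Matrix (Fin n) (Fin n) F ≃ₐ[F] Matrix (Fin n) (Fin n) F))
    (s : Matrix (Fin n) (Fin n) F)
    (x : Matrix (Fin n) (Fin n) F ⊗[F] Matrix (Fin n) (Fin n) F)
    (g : Multiplicative (ZMod n × ZMod n)) :
    gammaAlg act ((s ⊗ₜ 1) * x) g = s * gammaAlg act x g := by
  induction x with
  | zero => simp
  | tmul a b => simp [mul_assoc]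
  | add x y hx hy => simp only [mul_add, map_add, Pi.add_apply, hx, hy]

lemma clock_surjective (χ : AddChar (ZMod n) F) (hχ : χ.IsPrimitive) (e : Fin n ≃ ZMod n)
    (hn : (n : F) ≠ 0) : Function.Surjective (gammaAlg (clockAct χ e)) := by
  intro f
  let x : Multiplicative (ZMod n × ZMod n) →
      Matrix (Fin n) (Fin n) F ⊗[F] Matrix (Fin n) (Fin n) F := fun g =>
    (n : F)⁻¹ • ∑ i, ∑ j, Matrix.single i j (1 : F) ⊗ₜ[F]
      clockAct χ e g⁻¹ (Matrix.single j i 1)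
  have hx : ∀ g h, gammaAlg (clockAct χ e) (x g) h = if h = g then 1 else 0 := by
    intro g h
    have h3 := clock_key χ hχ e (h * g⁻¹).toAdd
    have h4 : (h * g⁻¹).toAdd = 0 ↔ h = g := by
      rw [toAdd_eq_zero, mul_inv_eq_one]
    simp only [h4] at h3
    have h5 : gammaAlg (clockAct χ e) (x g) h = (n : F)⁻¹ • ∑ i, ∑ j,
        Matrix.single i j (1 : F) * clockFun χ e (h * g⁻¹).toAdd (Matrix.single j i 1) := by
      simp only [x, map_smul, map_sum, gammaAlg_tmul, Pi.smul_apply, Finset.sum_apply]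
      simp only [← clockAct_apply, map_mul, AlgEquiv.mul_apply]
    rw [h5, h3]
    split_ifs
    · rw [smul_smul, inv_mul_cancel₀ hn, one_smul]
    · simp
  refine ⟨∑ g, (f g ⊗ₜ 1) * x g, ?_⟩
  funext h
  simp [map_sum, Finset.sum_apply, gamma_left_mul, hx]

lemma matrix_separable : IsSeparableExtension F (Matrix (Fin n) (Fin n) F) := by
  refine ⟨∑ i, Matrix.single i 0 1 ⊗ₜ Matrix.single 0 i 1, ?_, ?_⟩
  · intro s
    induction s using Matrix.induction_on' with
    | h_zero => simp
    | h_add p q hp hq => rw [TensorProduct.add_tmul, TensorProduct.tmul_add, add_mul, mul_add, hp, hq]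
    | h_std_basis k l c =>
      simp only [Finset.mul_sum, Finset.sum_mul, Algebra.TensorProduct.tmul_mul_tmul, one_mul,
        mul_one]
      rw [Finset.sum_eq_single l, Finset.sum_eq_single k]
      · have h1 : (Matrix.single k 0 c : Matrix (Fin n) (Fin n) F) = c • Matrix.single k 0 1 := by
          simp
        have h2 : (Matrix.single 0 l c : Matrix (Fin n) (Fin n) F) = c • Matrix.single 0 l 1 := by
          simp
        simp only [Matrix.single_mul_single_same, mul_one, one_mul]
        rw [h1, h2, TensorProduct.smul_tmul]
      · intro j _ hj
        rw [Matrix.single_mul_single_of_ne _ _ _ _ hj, TensorProduct.tmul_zero]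
      · simp
      · intro j _ hj
        rw [Matrix.single_mul_single_of_ne _ _ _ _ hj.symm, TensorProduct.zero_tmul]
      · simp
  · simp only [map_sum, LinearMap.mul'_apply, Matrix.single_mul_single_same, mul_one]
    ext i j
    rw [Matrix.sum_apply, Finset.sum_eq_single i]
    · simp [Matrix.single_apply, Matrix.one_apply]
    · intro k _ hk
      simp [Matrix.single_apply, hk]
    · simp

lemma matrix_central : IsCentralExtension F (Matrix (Fin n) (Fin n) F) := by
  refine ⟨(algebraMap F (Matrix (Fin n) (Fin n) F)).injective, ?_⟩
  ext M
  rw [Subring.mem_center_iff, ← Subalgebra.mem_center_iff (R := F),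
    Algebra.IsCentral.center_eq_bot, Algebra.mem_bot]
  rfl

end helpers

/-- Let `n ≥ 2` and `F` a field whose multiplicative group contains an
element `ζ` of order `n`.  Then there is an action of `(ℤ/nℤ)²` by `F`-algebra
automorphisms on the matrix algebra `M_n(F)` making the inclusion `F → M_n(F)` (as scalar
matrices) a `(ℤ/nℤ)²`-Galois-Azumaya extension. -/
theorem matrixAlgebra_isGaloisAzumaya
    (F : Type*) [Field F] (n : ℕ) (hn : 2 ≤ n) (ζ : Fˣ) (hζ : orderOf ζ = n) :
    letI : NeZero n := ⟨by omega⟩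
    ∃ act : Multiplicative (ZMod n × ZMod n) →*
        (Matrix (Fin n) (Fin n) F ≃ₐ[F] Matrix (Fin n) (Fin n) F),
      IsGaloisAzumayaExtension (Multiplicative (ZMod n × ZMod n)) F
        (Matrix (Fin n) (Fin n) F) act := by
  haveI : NeZero n := ⟨by omega⟩
  have hprim : IsPrimitiveRoot (ζ : F) n := by
    rw [IsPrimitiveRoot.coe_units_iff, ← hζ]
    exact IsPrimitiveRoot.orderOf ζ
  have hnF : (n : F) ≠ 0 := (hprim.neZero').out
  let χ := AddChar.zmodChar n hprim.pow_eq_one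
  have hχ : χ.IsPrimitive := AddChar.zmodChar_primitive_of_primitive_root n hprim
  let e : Fin n ≃ ZMod n := (ZMod.finEquiv n).toEquiv
  have hsurj := clock_surjective χ hχ e hnF
  refine ⟨clockAct χ e, ⟨inferInstance, ?_, hsurj⟩, matrix_central, matrix_separable⟩
  refine (LinearMap.injective_iff_surjective_of_finrank_eq_finrank ?_).2 hsurj
  rw [Module.finrank_tensorProduct, Module.finrank_pi_fintype]
  simp [Module.finrank_matrix, ZMod.card]

end
end Nuss
end

section
/- Let R be a commutative ring, ψ : R → S a centralizing G-Galois extension and ψ' : R → S' a centralizing G'-Galois extension (G, G' finite groups). Equip S ⊗_R S' with the multiplication (s ⊗ s')(t ⊗ t') = st ⊗ s't' and with the action of G × G' given by (g,g')·(s ⊗ s') = g(s) ⊗ g'(s'). Then the canonical extension ψ'' : R → S ⊗_R S', r ↦ ψ(r) ⊗ 1, is a centralizing (G × G')-Galois extension. If moreover ψ and ψ' are central (i.e. G-Galois-Azumaya and G'-Galois-Azumaya), then ψ'' is a central (G × G')-Galois extension, i.e. a (G × G')-Galois-Azumaya extension. -/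
open scoped TensorProduct

namespace Nuss
noncomputable section


variable {R : Type*} [CommRing R] {S S' : Type*} [Ring S] [Ring S'] [Algebra R S] [Algebra R S']

/-- The sandwich map `x ⊗ y ↦ (s ↦ x s y)`. -/
def sandwich (R S : Type*) [CommRing R] [Ring S] [Algebra R S] : S ⊗[R] S →ₗ[R] (S →ₗ[R] S) :=
  TensorProduct.lift <| LinearMap.mk₂ R
    (fun x y => (LinearMap.mulLeft R x).comp (LinearMap.mulRight R y))
    (fun x x' y => by ext s; simp [add_mul])
    (fun c x y => by ext s; simp)
    (fun x y y' => by ext s; simp [mul_add])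
    (fun c x y => by ext s; simp)

lemma sandwich_tmul (x y s : S) : sandwich R S (x ⊗ₜ[R] y) s = x * (s * y) := rfl

lemma sandwich_left (t s : S) (η : S ⊗[R] S) :
    sandwich R S ((t ⊗ₜ[R] (1 : S)) * η) s = t * sandwich R S η s := by
  induction η with
  | zero => simp
  | add a b ha hb => simp only [mul_add, map_add, LinearMap.add_apply, ha, hb]
  | tmul x y => simp [sandwich_tmul, mul_assoc]

lemma sandwich_right (t s : S) (η : S ⊗[R] S) :
    sandwich R S (η * ((1 : S) ⊗ₜ[R] t)) s = sandwich R S η s * t := by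
  induction η with
  | zero => simp
  | add a b ha hb => simp only [add_mul, map_add, LinearMap.add_apply, ha, hb]
  | tmul x y => simp [sandwich_tmul, mul_assoc]

lemma sandwich_center (z : S) (hz : z ∈ Subring.center S) (η : S ⊗[R] S) :
    sandwich R S η z = z * LinearMap.mul' R S η := by
  induction η with
  | zero => simp
  | add a b ha hb => simp only [mul_add, map_add, LinearMap.add_apply, ha, hb]
  | tmul x y =>
    rw [sandwich_tmul, LinearMap.mul'_apply, ← mul_assoc, ← mul_assoc,
      Subring.mem_center_iff.1 hz x]

lemma sandwich_mem_center (η : S ⊗[R] S)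
    (hη : ∀ s : S, (s ⊗ₜ[R] (1 : S)) * η = η * ((1 : S) ⊗ₜ[R] s)) (s : S) :
    sandwich R S η s ∈ Subring.center S := by
  rw [Subring.mem_center_iff]
  intro t
  rw [← sandwich_left, hη, sandwich_right]

lemma sandwich_comm (η : S ⊗[R] S) (η' : S' ⊗[R] S') (s : S) (s' : S') :
    sandwich R (S ⊗[R] S')
      (Algebra.TensorProduct.tensorTensorTensorComm R R R R S S S' S' (η ⊗ₜ[R] η'))
      (s ⊗ₜ[R] s') = sandwich R S η s ⊗ₜ[R] sandwich R S' η' s' := by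
  induction η with
  | zero => simp
  | add a b ha hb =>
    simp only [TensorProduct.add_tmul, map_add, LinearMap.add_apply, ha, hb]
  | tmul x y =>
    induction η' with
    | zero => simp
    | add a b ha hb =>
      simp only [TensorProduct.tmul_add, map_add, LinearMap.add_apply, ha, hb]
    | tmul x' y' => simp [sandwich_tmul]

lemma mul'_comm (η : S ⊗[R] S) (η' : S' ⊗[R] S') :
    LinearMap.mul' R (S ⊗[R] S')
      (Algebra.TensorProduct.tensorTensorTensorComm R R R R S S S' S' (η ⊗ₜ[R] η'))
      = LinearMap.mul' R S η ⊗ₜ[R] LinearMap.mul' R S' η' := by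
  induction η with
  | zero => simp
  | add a b ha hb =>
    simp only [TensorProduct.add_tmul, map_add, ha, hb]
  | tmul x y =>
    induction η' with
    | zero => simp
    | add a b ha hb =>
      simp only [TensorProduct.tmul_add, map_add, ha, hb]
    | tmul x' y' => simp

lemma casimir_comm (η : S ⊗[R] S) (η' : S' ⊗[R] S')
    (hη : ∀ s : S, (s ⊗ₜ[R] (1 : S)) * η = η * ((1 : S) ⊗ₜ[R] s))
    (hη' : ∀ s : S', (s ⊗ₜ[R] (1 : S')) * η' = η' * ((1 : S') ⊗ₜ[R] s)) (z : S ⊗[R] S') :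
    (z ⊗ₜ[R] (1 : S ⊗[R] S')) *
      (Algebra.TensorProduct.tensorTensorTensorComm R R R R S S S' S' (η ⊗ₜ[R] η')) =
      (Algebra.TensorProduct.tensorTensorTensorComm R R R R S S S' S' (η ⊗ₜ[R] η')) *
      ((1 : S ⊗[R] S') ⊗ₜ[R] z) := by
  induction z with
  | zero => simp
  | add a b ha hb =>
    simp only [TensorProduct.add_tmul, TensorProduct.tmul_add, add_mul, mul_add, ha, hb]
  | tmul s s' =>
    have h1 : ((s ⊗ₜ[R] s') ⊗ₜ[R] (1 : S ⊗[R] S')) =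
        Algebra.TensorProduct.tensorTensorTensorComm R R R R S S S' S'
          ((s ⊗ₜ[R] (1 : S)) ⊗ₜ[R] (s' ⊗ₜ[R] (1 : S'))) := by
      simp [Algebra.TensorProduct.one_def]
    have h2 : ((1 : S ⊗[R] S') ⊗ₜ[R] (s ⊗ₜ[R] s')) =
        Algebra.TensorProduct.tensorTensorTensorComm R R R R S S S' S'
          (((1 : S) ⊗ₜ[R] s) ⊗ₜ[R] ((1 : S') ⊗ₜ[R] s')) := by
      simp [Algebra.TensorProduct.one_def]
    rw [h1, h2, ← map_mul, ← map_mul, Algebra.TensorProduct.tmul_mul_tmul,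
      Algebra.TensorProduct.tmul_mul_tmul, hη, hη']

lemma faithfullyFlat_tensor (h : Module.FaithfullyFlat R S) (h' : Module.FaithfullyFlat R S') :
    Module.FaithfullyFlat R (S ⊗[R] S') := by
  rw [Module.FaithfullyFlat.iff_flat_and_lTensor_faithful]
  refine ⟨inferInstance, fun N _ _ hN => ?_⟩
  exact (TensorProduct.assoc R S S' N).toEquiv.nontrivial

/-- Finite products commute with tensor products, in both variables. -/
def piPiEquiv (R S S' : Type*) [CommRing R] [Ring S] [Ring S'] [Algebra R S] [Algebra R S']
    (G G' : Type*) [Fintype G] [Fintype G'] [DecidableEq G] [DecidableEq G'] :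
    (G → S) ⊗[R] (G' → S') ≃ (G × G' → S ⊗[R] S') :=
  ((TensorProduct.piLeft R (G' → S') (fun _ : G => S)).toEquiv.trans
    (Equiv.piCongrRight fun _ => (TensorProduct.piRight R R S (fun _ : G' => S')).toEquiv)).trans
    (Equiv.curry G G' (S ⊗[R] S')).symm

end
end Nuss

namespace Nuss
noncomputable section

/-- Let `R` be a commutative ring, `ψ : R → S` a centralizing `G`-Galois
extension and `ψ' : R → S'` a centralizing `G'`-Galois extension.  With the multiplication
`(s ⊗ s')(t ⊗ t') = st ⊗ s't'` and the action `(g,g')⬝(s ⊗ s') = g(s) ⊗ g'(s')` of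
`G × G'`, the canonical extension `ψ'' : R → S ⊗_R S'` is a centralizing
`(G × G')`-Galois extension.  If moreover `ψ` and `ψ'` are central (i.e. Galois-Azumaya),
then `ψ''` is a central `(G × G')`-Galois extension, i.e. a `(G × G')`-Galois-Azumaya
extension. -/
theorem tensorProduct_isGalois
    {R : Type*} [CommRing R] {S S' : Type*} [Ring S] [Ring S']
    [Algebra R S] [Algebra R S']
    {G G' : Type*} [Group G] [Group G'] [Finite G] [Finite G']
    (act : G →* (S ≃ₐ[R] S)) (act' : G' →* (S' ≃ₐ[R] S'))
    (hGal : IsCentralizingGaloisExtension G R S act)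
    (hGal' : IsCentralizingGaloisExtension G' R S' act')
    (act'' : (G × G') →* ((S ⊗[R] S') ≃ₐ[R] (S ⊗[R] S')))
    (hact'' : ∀ (g : G) (g' : G') (s : S) (s' : S'),
      act'' (g, g') (s ⊗ₜ[R] s') = (act g s) ⊗ₜ[R] (act' g' s')) :
    IsCentralizingGaloisExtension (G × G') R (S ⊗[R] S') act'' ∧
    (IsGaloisAzumayaExtension G R S act → IsGaloisAzumayaExtension G' R S' act' →
      IsGaloisAzumayaExtension (G × G') R (S ⊗[R] S') act'') := by
  classical
  have := Fintype.ofFinite G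
  have := Fintype.ofFinite G'
  have key : IsCentralizingGaloisExtension (G × G') R (S ⊗[R] S') act'' := by
    refine ⟨faithfullyFlat_tensor hGal.faithfullyFlat hGal'.faithfullyFlat, ?_⟩
    let e := LinearEquiv.ofBijective _ hGal.bijective
    let e' := LinearEquiv.ofBijective _ hGal'.bijective
    let E : (S ⊗[R] S') ⊗[R] (S ⊗[R] S') ≃ (G × G' → S ⊗[R] S') :=
      ((TensorProduct.tensorTensorTensorComm R S S' S S').trans
        (TensorProduct.congr e e')).toEquiv.trans (piPiEquiv R S S' G G')
    have hadd : ∀ x y, E (x + y) = E x + E y := by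
      intro x y
      funext g
      simp [E, piPiEquiv, Function.uncurry, Equiv.piCongrRight, Pi.map]
    have hE : ∀ x, gammaAlg act'' x = E x := by
      have h0 : E 0 = 0 := by simpa using hadd 0 0
      intro x
      induction x with
      | zero => rw [h0, map_zero]
      | add a b ha hb => rw [hadd, map_add, ha, hb]
      | tmul a b =>
        induction a with
        | zero => rw [TensorProduct.zero_tmul, h0, map_zero]
        | add a b ha hb => rw [TensorProduct.add_tmul, hadd, map_add, ha, hb]
        | tmul s s' =>
          induction b with
          | zero => rw [TensorProduct.tmul_zero, h0, map_zero]
          | add a b ha hb => rw [TensorProduct.tmul_add, hadd, map_add, ha, hb]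
          | tmul t t' =>
            funext ⟨g, g'⟩
            simp [E, piPiEquiv, e, e', hact'']
    have : ⇑(gammaAlg act'') = ⇑E := funext hE
    rw [this]
    exact E.bijective
  refine ⟨key, ?_⟩
  rintro ⟨-, ⟨hi, hc⟩, η, hη, h1⟩ ⟨-, ⟨hi', hc'⟩, η', hη', h1'⟩
  have hone := (mul'_comm η η').trans (by rw [h1, h1', ← Algebra.TensorProduct.one_def])
  have hcas := casimir_comm η η' hη hη'
  refine ⟨key, ⟨?_, ?_⟩, _, hcas, hone⟩
  · have := hGal.faithfullyFlat
    exact (Algebra.TensorProduct.includeLeft_injective (S := R) (A := S) (B := S') hi').comp hi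
  · apply le_antisymm
    · rintro _ ⟨r, rfl⟩
      rw [Subring.mem_center_iff]
      exact fun g => (Algebra.commutes r g).symm
    · intro z hz
      have hz' := sandwich_center z hz
        (Algebra.TensorProduct.tensorTensorTensorComm R R R R S S S' S' (η ⊗ₜ[R] η'))
      rw [hone, mul_one] at hz'
      rw [← hz']
      clear hz' hz
      induction z with
      | zero => rw [map_zero]; exact zero_mem _
      | add a b ha hb => rw [map_add]; exact add_mem ha hb
      | tmul s s' =>
        rw [sandwich_comm]
        have ha := sandwich_mem_center η hη s
        have hb := sandwich_mem_center η' hη' s'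
        rw [← hc] at ha
        rw [← hc'] at hb
        obtain ⟨a, ha⟩ := ha
        obtain ⟨b, hb⟩ := hb
        rw [← ha, ← hb]
        refine ⟨a * b, ?_⟩
        rw [map_mul]
        conv_lhs => rw [Algebra.TensorProduct.algebraMap_apply]
        conv_lhs => rw [Algebra.TensorProduct.algebraMap_apply']
        simp

end
end Nuss
end

section
/- Let F be a field. Let Br_Gal(F) denote the set of those classes ξ in the Brauer group Br(F) for which there exist a finite group G and a G-Galois-Azumaya extension ψ : F → S with [S] = ξ. Then Br_Gal(F) is a subgroup of Br(F): it contains the neutral class [F], is closed under the product (represented by tensor product of algebras over F), and is closed under inverses (represented by the opposite algebra). -/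
open scoped TensorProduct

namespace Nuss
noncomputable section

universe u

variable (F : Type u) [Field F]

/-- A bundled `G`-Galois-Azumaya extension of the field `F`. -/
structure GaloisAzumayaAlgebra : Type (u + 1) where
  /-- the underlying algebra -/
  carrier : Type u
  [ring : Ring carrier]
  [alg : Algebra F carrier]
  /-- the Galois group -/
  Grp : Type u
  [group : Group Grp]
  [finite : Finite Grp]
  /-- the action of the Galois group -/
  act : Grp →* (carrier ≃ₐ[F] carrier)
  /-- `F → carrier` is a `Grp`-Galois-Azumaya extension -/
  isGaloisAzumaya : IsGaloisAzumayaExtension Grp F carrier act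

attribute [instance] GaloisAzumayaAlgebra.ring GaloisAzumayaAlgebra.alg
  GaloisAzumayaAlgebra.group GaloisAzumayaAlgebra.finite

/-- Brauer equivalence of two `F`-algebras: they become isomorphic after tensoring with
(i.e. taking) matrix algebras. -/
def BrauerEquiv (A B : Type u) [Ring A] [Algebra F A] [Ring B] [Algebra F B] : Prop :=
  ∃ p q : ℕ, 0 < p ∧ 0 < q ∧
    Nonempty (Matrix (Fin p) (Fin p) A ≃ₐ[F] Matrix (Fin q) (Fin q) B)

/-- The Brauer class of `A` belongs to the Brauer–Galois group of `F`: some `G`-Galois-Azumaya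
extension of `F` represents the class of `A` modulo Brauer equivalence. -/
def IsBrauerGaloisClass (A : Type u) [Ring A] [Algebra F A] : Prop :=
  ∃ W : GaloisAzumayaAlgebra F, BrauerEquiv F W.carrier A

section Helpers

open MulOpposite

theorem faithfullyFlat_of_inj {F S : Type*} [Field F] [Ring S] [Algebra F S]
    (h : Function.Injective (algebraMap F S)) : Module.FaithfullyFlat F S := by
  haveI : Nontrivial S := h.nontrivial
  infer_instance

/-- It suffices to give the Galois bijection, centrality and separability. -/
theorem isGaloisAzumaya_of_field {G F S : Type*} [Group G] [Finite G] [Field F] [Ring S]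
    [Algebra F S] {act : G →* (S ≃ₐ[F] S)} (hb : Function.Bijective (gammaAlg act))
    (hc : IsCentralExtension F S) (hs : IsSeparableExtension F S) :
    IsGaloisAzumayaExtension G F S act :=
  ⟨⟨faithfullyFlat_of_inj hc.1, hb⟩, hc, hs⟩

/-- A central element is a scalar. -/
theorem IsCentralExtension.exists_of_comm {R S : Type*} [CommRing R] [Ring S] [Algebra R S]
    (h : IsCentralExtension R S) (z : S) (hz : ∀ s, s * z = z * s) :
    ∃ r, algebraMap R S r = z := by
  have : z ∈ (algebraMap R S).range := by
    rw [h.2, Subring.mem_center_iff]; exact hz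
  exact this

theorem isCentralExtension_of {R S : Type*} [CommRing R] [Ring S] [Algebra R S]
    (hi : Function.Injective (algebraMap R S))
    (h : ∀ z : S, (∀ s, s * z = z * s) → ∃ r, algebraMap R S r = z) :
    IsCentralExtension R S := by
  refine ⟨hi, le_antisymm ?_ ?_⟩
  · rintro _ ⟨r, rfl⟩
    rw [Subring.mem_center_iff]
    intro s
    exact (Algebra.commutes r s).symm
  · intro z hz
    rw [Subring.mem_center_iff] at hz
    exact h z hz

/-! ### The neutral class -/

theorem isGaloisAzumaya_self (F : Type u) [Field F] :
    IsGaloisAzumayaExtension PUnit.{u+1} F F (1 : PUnit.{u+1} →* (F ≃ₐ[F] F)) := by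
  refine isGaloisAzumaya_of_field ?_ ?_ ?_
  · have : (gammaAlg (1 : PUnit.{u+1} →* (F ≃ₐ[F] F)) : F ⊗[F] F → (PUnit.{u+1} → F)) =
        (TensorProduct.lid F F ≪≫ₗ (LinearEquiv.funUnique PUnit.{u+1} F F).symm) := by
      funext x
      induction x using TensorProduct.induction_on with
      | zero => simp
      | tmul a b => funext g; simp
      | add x y hx hy => rw [map_add, map_add, hx, hy]
    rw [this]
    exact LinearEquiv.bijective _
  · exact isCentralExtension_of (fun _ _ h => h) (fun z _ => ⟨z, rfl⟩)
  · refine ⟨1 ⊗ₜ 1, fun s => ?_, by simp⟩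
    simp only [Algebra.TensorProduct.tmul_mul_tmul, mul_one, one_mul]
    rw [← mul_one s, ← smul_eq_mul, TensorProduct.smul_tmul]

/-! ### Opposites -/

/-- The action on the opposite algebra. -/
def actOp {F S G : Type*} [Field F] [Ring S] [Algebra F S] [Group G]
    (act : G →* (S ≃ₐ[F] S)) : G →* (Sᵐᵒᵖ ≃ₐ[F] Sᵐᵒᵖ) where
  toFun g := AlgEquiv.op (act g)
  map_one' := by ext x; simp
  map_mul' g h := by ext x; simp

/-- The flip `S ⊗ S → Sᵒᵖ ⊗ Sᵒᵖ`. -/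
def flipOp (F S : Type*) [Field F] [Ring S] [Algebra F S] : S ⊗[F] S ≃ₗ[F] Sᵐᵒᵖ ⊗[F] Sᵐᵒᵖ :=
  TensorProduct.comm F S S ≪≫ₗ
    TensorProduct.congr (MulOpposite.opLinearEquiv F) (MulOpposite.opLinearEquiv F)

@[simp] theorem flipOp_tmul {F S : Type*} [Field F] [Ring S] [Algebra F S] (a b : S) :
    flipOp F S (a ⊗ₜ b) = op b ⊗ₜ op a := rfl

/-- The comparison on the target of the Galois map. -/
def mapOp {F S G : Type*} [Field F] [Ring S] [Algebra F S] [Group G]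
    (act : G →* (S ≃ₐ[F] S)) : (G → S) ≃ (G → Sᵐᵒᵖ) where
  toFun f g := op (act g (f g⁻¹))
  invFun f g := act g (unop (f g⁻¹))
  left_inv f := by
    funext g
    have : act g (act g⁻¹ (f g)) = f g := by
      rw [← AlgEquiv.mul_apply, ← map_mul]; simp
    simpa using this
  right_inv f := by
    funext g
    have : act g (act g⁻¹ (unop (f g))) = unop (f g) := by
      rw [← AlgEquiv.mul_apply, ← map_mul]; simp
    simpa using congrArg op this

theorem gamma_op {F S G : Type*} [Field F] [Ring S] [Algebra F S] [Group G]
    (act : G →* (S ≃ₐ[F] S)) (x : S ⊗[F] S) :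
    gammaAlg (actOp act) (flipOp F S x) = mapOp act (gammaAlg act x) := by
  induction x using TensorProduct.induction_on with
  | zero => funext g; simp [mapOp]
  | tmul a b =>
    funext g
    have : act g (act g⁻¹ b) = b := by
      rw [← AlgEquiv.mul_apply, ← map_mul]; simp
    simp [mapOp, actOp, this]
  | add x y hx hy =>
    rw [map_add, map_add, hx, hy, map_add]
    funext g
    simp [mapOp]

theorem isGaloisAzumaya_op {F S G : Type*} [Field F] [Ring S] [Algebra F S] [Group G] [Finite G]
    {act : G →* (S ≃ₐ[F] S)} (h : IsGaloisAzumayaExtension G F S act) :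
    IsGaloisAzumayaExtension G F Sᵐᵒᵖ (actOp act) := by
  obtain ⟨⟨-, hb⟩, hc, η, hη, hη1⟩ := h
  refine isGaloisAzumaya_of_field ?_ ?_ ?_
  · have : (gammaAlg (actOp act) : Sᵐᵒᵖ ⊗[F] Sᵐᵒᵖ → (G → Sᵐᵒᵖ)) =
        mapOp act ∘ gammaAlg act ∘ (flipOp F S).symm := by
      funext y
      obtain ⟨x, rfl⟩ := (flipOp F S).surjective y
      simp [gamma_op]
    rw [this]
    exact (mapOp act).bijective.comp (hb.comp (flipOp F S).symm.bijective)
  · refine isCentralExtension_of (fun a b hab => hc.1 (op_injective hab)) (fun z hz => ?_)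
    obtain ⟨r, hr⟩ := hc.exists_of_comm (unop z)
      (fun s => (congrArg unop (hz (op s))).symm)
    exact ⟨r, unop_injective hr⟩
  · refine ⟨flipOp F S η, fun s => ?_, ?_⟩
    · have h1 : ∀ x : S ⊗[F] S, (s ⊗ₜ[F] (1 : Sᵐᵒᵖ)) * flipOp F S x =
          flipOp F S (x * ((1 : S) ⊗ₜ[F] unop s)) := by
        intro x
        induction x using TensorProduct.induction_on with
        | zero => simp
        | tmul a b => simp
        | add x y hx hy => simp only [map_add, mul_add, add_mul, hx, hy]
      have h2 : ∀ x : S ⊗[F] S, flipOp F S x * ((1 : Sᵐᵒᵖ) ⊗ₜ[F] s) =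
          flipOp F S ((unop s ⊗ₜ[F] (1 : S)) * x) := by
        intro x
        induction x using TensorProduct.induction_on with
        | zero => simp
        | tmul a b => simp
        | add x y hx hy => simp only [map_add, mul_add, add_mul, hx, hy]
      rw [h1, h2, hη]
    · have h3 : ∀ x : S ⊗[F] S, LinearMap.mul' F Sᵐᵒᵖ (flipOp F S x) =
          op (LinearMap.mul' F S x) := by
        intro x
        induction x using TensorProduct.induction_on with
        | zero => simp
        | tmul a b => simp
        | add x y hx hy => simp only [map_add, op_add, hx, hy]
      rw [h3, hη1, op_one]

theorem BrauerEquiv.op {F A B : Type u} [Field F] [Ring A] [Algebra F A] [Ring B] [Algebra F B]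
    (h : BrauerEquiv F A B) : BrauerEquiv F Aᵐᵒᵖ Bᵐᵒᵖ := by
  obtain ⟨p, q, hp, hq, ⟨e⟩⟩ := h
  exact ⟨p, q, hp, hq, ⟨AlgEquiv.mopMatrix.trans ((AlgEquiv.op e).trans AlgEquiv.mopMatrix.symm)⟩⟩

/-! ### Tensor products -/

theorem BrauerEquiv.tensor {F A B C D : Type u} [Field F] [Ring A] [Algebra F A] [Ring B]
    [Algebra F B] [Ring C] [Algebra F C] [Ring D] [Algebra F D]
    (h : BrauerEquiv F A B) (h' : BrauerEquiv F C D) :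
    BrauerEquiv F (A ⊗[F] C) (B ⊗[F] D) := by
  obtain ⟨p, q, hp, hq, ⟨e⟩⟩ := h
  obtain ⟨p', q', hp', hq', ⟨e'⟩⟩ := h'
  refine ⟨p * p', q * q', Nat.mul_pos hp hp', Nat.mul_pos hq hq', ⟨?_⟩⟩
  exact (Matrix.reindexAlgEquiv F (A ⊗[F] C) finProdFinEquiv).symm.trans
    ((Matrix.kroneckerTMulAlgEquiv (Fin p) (Fin p') F F A C).symm.trans
      ((Algebra.TensorProduct.congr e e').trans
        ((Matrix.kroneckerTMulAlgEquiv (Fin q) (Fin q') F F B D).trans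
          (Matrix.reindexAlgEquiv F (B ⊗[F] D) finProdFinEquiv))))

section Tensor

variable {F A B G H : Type*} [Field F] [Ring A] [Algebra F A] [Ring B] [Algebra F B]
  [Group G] [Group H]

/-- The action of `G × H` on `A ⊗ B`. -/
def actTensor (act : G →* (A ≃ₐ[F] A)) (act' : H →* (B ≃ₐ[F] B)) :
    G × H →* ((A ⊗[F] B) ≃ₐ[F] (A ⊗[F] B)) where
  toFun g := Algebra.TensorProduct.congr (act g.1) (act' g.2)
  map_one' := by
    apply AlgEquiv.ext
    intro x
    induction x using TensorProduct.induction_on with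
    | zero => simp
    | tmul a b => simp
    | add x y hx hy => rw [map_add, map_add, hx, hy]
  map_mul' g h := by
    apply AlgEquiv.ext
    intro x
    induction x using TensorProduct.induction_on with
    | zero => simp
    | tmul a b => simp
    | add x y hx hy => rw [map_add, map_add, hx, hy]

/-- `Map(G,A) ⊗ Map(H,B) ≃ Map(G × H, A ⊗ B)`. -/
theorem exists_piTensor [Finite G] [Finite H] :
    ∃ e : (G → A) ⊗[F] (H → B) ≃ₗ[F] (G × H → A ⊗[F] B),
      ∀ f f', e (f ⊗ₜ f') = fun g => f g.1 ⊗ₜ f' g.2 := by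
  classical
  haveI := Fintype.ofFinite G
  haveI := Fintype.ofFinite H
  let e1 : (G → A) ⊗[F] (H → B) ≃ₗ[F] (H → (G → A) ⊗[F] B) :=
    TensorProduct.piRight F F (G → A) (fun _ : H => B)
  let e2 : (G → A) ⊗[F] B ≃ₗ[F] (G → A ⊗[F] B) :=
    TensorProduct.piLeft F B (fun _ : G => A)
  let e3 : (H → (G → A) ⊗[F] B) ≃ₗ[F] (H → G → A ⊗[F] B) :=
    LinearEquiv.piCongrRight fun _ => e2
  let e4 : (H → G → A ⊗[F] B) ≃ₗ[F] (G × H → A ⊗[F] B) :=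
    { toFun := fun f g => f g.2 g.1
      invFun := fun f h g => f (g, h)
      left_inv := fun _ => rfl
      right_inv := fun _ => rfl
      map_add' := fun _ _ => rfl
      map_smul' := fun _ _ => rfl }
  refine ⟨e1 ≪≫ₗ e3 ≪≫ₗ e4, fun f f' => ?_⟩
  funext g
  simp [e1, e2, e3, e4]

theorem gamma_tensor_bijective [Finite G] [Finite H]
    {act : G →* (A ≃ₐ[F] A)} {act' : H →* (B ≃ₐ[F] B)}
    (h : Function.Bijective (gammaAlg act)) (h' : Function.Bijective (gammaAlg act')) :
    Function.Bijective (gammaAlg (actTensor act act')) := by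
  obtain ⟨e, he⟩ := exists_piTensor (F := F) (A := A) (B := B) (G := G) (H := H)
  have key : gammaAlg (actTensor act act') =
      e.toLinearMap ∘ₗ (TensorProduct.map (gammaAlg act) (gammaAlg act')) ∘ₗ
        (TensorProduct.tensorTensorTensorComm F A B A B).toLinearMap := by
    ext a b a' b' g
    simp [he, actTensor]
  rw [key]
  simp only [LinearMap.coe_comp]
  exact e.bijective.comp ((TensorProduct.map_bijective h h').comp (LinearEquiv.bijective _))

theorem central_tensor (h : IsCentralExtension F A) (h' : IsCentralExtension F B) :
    IsCentralExtension F (A ⊗[F] B) := by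
  haveI : Nontrivial A := h.1.nontrivial
  haveI : Nontrivial B := h'.1.nontrivial
  refine isCentralExtension_of (FaithfulSMul.algebraMap_injective F _) fun z hz => ?_
  have hz1 : z ∈ Subalgebra.centralizer F
      ((Algebra.TensorProduct.includeLeft : A →ₐ[F] A ⊗[F] B).range : Set (A ⊗[F] B)) := by
    rw [Subalgebra.mem_centralizer_iff]
    intro g _
    exact hz g
  rw [Subalgebra.centralizer_coe_range_includeLeft_eq_center_tensorProduct] at hz1
  obtain ⟨w, rfl⟩ := hz1
  obtain ⟨b, hb⟩ : ∃ b : B, (1 : A) ⊗ₜ[F] b =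
      Algebra.TensorProduct.map (Subalgebra.center F A).val (AlgHom.id F B) w := by
    clear hz
    induction w using TensorProduct.induction_on with
    | zero => exact ⟨0, by simp⟩
    | tmul c b =>
      obtain ⟨r, hr⟩ := h.exists_of_comm (c : A)
        (fun s => Subalgebra.mem_center_iff.1 c.2 s)
      refine ⟨r • b, ?_⟩
      rw [TensorProduct.tmul_smul, TensorProduct.smul_tmul', ← Algebra.algebraMap_eq_smul_one, hr]
      simp
    | add x y hx hy =>
      obtain ⟨b, hb⟩ := hx
      obtain ⟨b', hb'⟩ := hy
      exact ⟨b + b', by rw [TensorProduct.tmul_add, hb, hb', map_add]⟩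
  change ∀ s, s * Algebra.TensorProduct.map (Subalgebra.center F A).val (AlgHom.id F B) w =
    Algebra.TensorProduct.map (Subalgebra.center F A).val (AlgHom.id F B) w * s at hz
  change ∃ r, _ = Algebra.TensorProduct.map (Subalgebra.center F A).val (AlgHom.id F B) w
  rw [← hb] at hz ⊢
  have inj : Function.Injective (Algebra.TensorProduct.includeRight : B →ₐ[F] A ⊗[F] B) :=
    Algebra.TensorProduct.includeRight_injective h.1
  obtain ⟨r, hr⟩ := h'.exists_of_comm b (fun s => inj (by simpa using hz (1 ⊗ₜ s)))
  refine ⟨r, ?_⟩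
  rw [← hr, Algebra.algebraMap_eq_smul_one (A := B), TensorProduct.tmul_smul,
    Algebra.algebraMap_eq_smul_one, Algebra.TensorProduct.one_def]

theorem separable_tensor (h : IsSeparableExtension F A) (h' : IsSeparableExtension F B) :
    IsSeparableExtension F (A ⊗[F] B) := by
  obtain ⟨η, hη, hη1⟩ := h
  obtain ⟨θ, hθ, hθ1⟩ := h'
  let e : (A ⊗[F] B) ⊗[F] (A ⊗[F] B) ≃ₐ[F] (A ⊗[F] A) ⊗[F] (B ⊗[F] B) :=
    Algebra.TensorProduct.tensorTensorTensorComm F F F F A B A B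
  have het : ∀ a b a' b', e ((a ⊗ₜ b) ⊗ₜ (a' ⊗ₜ b')) = (a ⊗ₜ a') ⊗ₜ (b ⊗ₜ b') :=
    fun _ _ _ _ => rfl
  refine ⟨e.symm (η ⊗ₜ θ), fun s => ?_, ?_⟩
  · apply e.injective
    rw [map_mul, map_mul, e.apply_symm_apply]
    induction s using TensorProduct.induction_on with
    | zero => simp
    | tmul a b =>
      rw [Algebra.TensorProduct.one_def, het, het, Algebra.TensorProduct.tmul_mul_tmul,
        Algebra.TensorProduct.tmul_mul_tmul, hη, hθ]
    | add x y hx hy =>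
      rw [TensorProduct.add_tmul, TensorProduct.tmul_add, map_add, map_add, add_mul, mul_add,
        hx, hy]
  · have key : LinearMap.mul' F (A ⊗[F] B) =
        TensorProduct.map (LinearMap.mul' F A) (LinearMap.mul' F B) ∘ₗ e.toLinearMap := by
      ext a b a' b'
      simp [het]
    rw [key]
    simp [hη1, hθ1, Algebra.TensorProduct.one_def]

theorem isGaloisAzumaya_tensor [Finite G] [Finite H]
    {act : G →* (A ≃ₐ[F] A)} {act' : H →* (B ≃ₐ[F] B)}
    (h : IsGaloisAzumayaExtension G F A act) (h' : IsGaloisAzumayaExtension H F B act') :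
    IsGaloisAzumayaExtension (G × H) F (A ⊗[F] B) (actTensor act act') :=
  isGaloisAzumaya_of_field (gamma_tensor_bijective h.1.bijective h'.1.bijective)
    (central_tensor h.2.1 h'.2.1) (separable_tensor h.2.2 h'.2.2)

end Tensor

end Helpers

/-- The set `Br_Gal(F)` of Brauer classes of `F` represented (modulo
Brauer equivalence) by Galois-Azumaya extensions of `F` is a subgroup of the Brauer group
`Br(F)`: it contains the neutral class `[F]`, is closed under the product (represented by
the tensor product of algebras over `F`), and is closed under inverses (represented by the
opposite algebra). -/
theorem brauerGalois_subgroup (F : Type u) [Field F] :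
    IsBrauerGaloisClass F F ∧
    (∀ (A B : Type u) [Ring A] [Algebra F A] [Ring B] [Algebra F B],
      IsBrauerGaloisClass F A → IsBrauerGaloisClass F B →
        IsBrauerGaloisClass F (A ⊗[F] B)) ∧
    (∀ (A : Type u) [Ring A] [Algebra F A],
      IsBrauerGaloisClass F A → IsBrauerGaloisClass F Aᵐᵒᵖ) := by
  refine ⟨⟨⟨F, PUnit, 1, isGaloisAzumaya_self F⟩, 1, 1, one_pos, one_pos, ⟨AlgEquiv.refl⟩⟩, ?_, ?_⟩
  · rintro A B _ _ _ _ ⟨W, hW⟩ ⟨V, hV⟩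
    exact ⟨⟨W.carrier ⊗[F] V.carrier, W.Grp × V.Grp, actTensor W.act V.act,
      isGaloisAzumaya_tensor W.isGaloisAzumaya V.isGaloisAzumaya⟩, hW.tensor hV⟩
  · rintro A _ _ ⟨W, hW⟩
    exact ⟨⟨W.carrierᵐᵒᵖ, W.Grp, actOp W.act, isGaloisAzumaya_op W.isGaloisAzumaya⟩, hW.op⟩

end
end Nuss
end
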